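/- For every (t,x) ∈ (a,b) × ℝ, the partial derivative of B in t satisfies ∂_t B(t,x) = ((m − m')/2) · C(t,x). -/

import Mathlib

/-! Write `q = m'`, `σ = √(b - t)`, `s = √(t - a)`, `r = m / m'`. Then `A = (1 / q) log K`, where
`K = E[exp (q |y + z σ|)]` solves the backward heat equation `∂ₜK = -(1 / 2) ∂_y² K`, and
`B = (1 / m) log E[K ^ r (t, x + z s)]`. Differentiating the last expectation in `t` gives
`E[r K ^ r (-N / 2 + D z / (2 s))]` with `D = ∂_y K / K` and `N = ∂_y² K / K`. Gaussian
integration by parts turns `E[z K ^ r D]` into `s E[K ^ r (N + (r - 1) D²)]`, so the terms in `N`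
cancel and `(r (r - 1) / 2) E[K ^ r D²]` remains. As `D = q ∂ₓA` and `K ^ r = exp (m A)`, dividing
by `m E[K ^ r]` gives `((m - m') / 2) C`.

To justify these manipulations, `K` is computed in closed form through the Gaussian distribution
function (`K_eq`). This yields explicit derivatives (`hasDerivAt_K`, `hasDerivAt_J`) and the bounds
`|D| ≤ q`, `0 ≤ N ≤ q² + 2 q / σ`, `K ^ r ≤ const * exp (const * |y|)`, which dominate the
derivative locally uniformly in `t` (`hasDerivAt_integral_H`) and permit the integration by parts
(`integral_time_deriv`).
-/

open MeasureTheory ProbabilityTheory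

/-- `A(t,x) = (1/m') log E[exp(m'|x + z√(b-t)|)]` for a standard Gaussian `z`. -/
noncomputable def A (b m' t x : ℝ) : ℝ :=
  (1 / m') * Real.log (∫ z, Real.exp (m' * |x + z * Real.sqrt (b - t)|) ∂(gaussianReal 0 1))

/-- `B(t,x) = (1/m) log E[exp(m A(t, x + z√(t-a)))]` for a standard Gaussian `z`. -/
noncomputable def B (a b m m' t x : ℝ) : ℝ :=
  (1 / m) * Real.log
    (∫ z, Real.exp (m * A b m' t (x + z * Real.sqrt (t - a))) ∂(gaussianReal 0 1))

/-- `V(t,x,y) = exp(m (A(t,y) - B(t,x)))`. -/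
noncomputable def V (a b m m' t x y : ℝ) : ℝ :=
  Real.exp (m * (A b m' t y - B a b m m' t x))

/-- `C(t,x) = E[(∂ₓA(t, x+z√(t-a)))² V(t,x,x+z√(t-a))]`. -/
noncomputable def C (a b m m' t x : ℝ) : ℝ :=
  ∫ z, (deriv (A b m' t) (x + z * Real.sqrt (t - a))) ^ 2
      * V a b m m' t x (x + z * Real.sqrt (t - a)) ∂(gaussianReal 0 1)


namespace ParisiStep
open Real Set Filter Topology

/-- The standard Gaussian density. -/
noncomputable def pdf (u : ℝ) : ℝ := gaussianPDFReal 0 1 u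
/-- The standard Gaussian distribution function. -/
noncomputable def cdf (u : ℝ) : ℝ := ∫ w in Iic u, pdf w

/-! ### The Gaussian density and distribution function -/

lemma pdf_eq (u : ℝ) : pdf u = (√(2 * π))⁻¹ * exp (-u ^ 2 / 2) := by
  simp [pdf, gaussianPDFReal]

lemma pdf_nonneg (u : ℝ) : 0 ≤ pdf u := gaussianPDFReal_nonneg 0 1 u

lemma pdf_le_one (u : ℝ) : pdf u ≤ 1 := by
  rw [pdf_eq]
  have h1 : (√(2 * π))⁻¹ ≤ 1 := by
    apply inv_le_one_of_one_le₀
    rw [Real.one_le_sqrt]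
    nlinarith [Real.pi_gt_three]
  have h2 : exp (-u ^ 2 / 2) ≤ 1 := by
    rw [Real.exp_le_one_iff]; nlinarith [sq_nonneg u]
  have h3 : 0 ≤ (√(2 * π))⁻¹ := by positivity
  nlinarith [exp_pos (-u ^ 2 / 2)]

lemma integrable_pdf : Integrable pdf := integrable_gaussianPDFReal 0 1

lemma integral_pdf : ∫ w, pdf w = 1 := integral_gaussianPDFReal_eq_one 0 one_ne_zero

@[fun_prop]
lemma continuous_pdf : Continuous pdf := by
  have : pdf = fun u => (√(2 * π))⁻¹ * exp (-u ^ 2 / 2) := funext pdf_eq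
  rw [this]; fun_prop

lemma hasDerivAt_pdf (u : ℝ) : HasDerivAt pdf (-(u * pdf u)) u := by
  have : pdf = fun u => (√(2 * π))⁻¹ * exp (-u ^ 2 / 2) := funext pdf_eq
  rw [this]
  have h : HasDerivAt (fun u : ℝ => -u ^ 2 / 2) (-u) u := by
    have := ((hasDerivAt_pow 2 u).fun_neg.div_const 2)
    refine this.congr_deriv ?_
    norm_num; ring
  refine (h.exp.const_mul ((√(2 * π))⁻¹)).congr_deriv ?_
  ring

lemma cdf_nonneg (u : ℝ) : 0 ≤ cdf u := setIntegral_nonneg measurableSet_Iic fun w _ => pdf_nonneg w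

lemma cdf_le_one (u : ℝ) : cdf u ≤ 1 := by
  rw [← integral_pdf]
  exact setIntegral_le_integral integrable_pdf (ae_of_all _ pdf_nonneg)

lemma hasDerivAt_cdf (u : ℝ) : HasDerivAt cdf (pdf u) u := by
  have h : cdf = fun u => cdf 0 + ∫ w in (0 : ℝ)..u, pdf w := by
    ext v
    have := intervalIntegral.integral_Iic_sub_Iic (a := 0) (b := v)
      integrable_pdf.integrableOn integrable_pdf.integrableOn
    simp only [cdf]; linarith
  rw [h]
  exact (continuous_pdf.integral_hasStrictDerivAt 0 u).hasDerivAt.const_add _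

lemma setIntegral_Iic_pdf_add (c d : ℝ) : ∫ w in Iic c, pdf (w + d) = cdf (c + d) := by
  rw [cdf, ← integral_indicator measurableSet_Iic, ← integral_indicator measurableSet_Iic,
    ← integral_add_right_eq_self ((Iic (c + d)).indicator fun w => pdf w) d]
  congr 1; ext w
  simp [indicator]

lemma pdf_neg (u : ℝ) : pdf (-u) = pdf u := by simp [pdf_eq]

lemma setIntegral_Ioi_pdf_sub (c d : ℝ) : ∫ w in Ioi c, pdf (w - d) = cdf (d - c) := by
  rw [← integral_Ici_eq_integral_Ioi, cdf, ← integral_indicator measurableSet_Iic,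
    ← integral_indicator measurableSet_Ici, ← integral_sub_left_eq_self _ _ d]
  congr 1; ext w
  simp only [indicator, mem_Ici, mem_Iic]
  have h1 : c ≤ d - w ↔ w ≤ d - c := by constructor <;> intro h <;> linarith
  simp only [h1]
  rw [← pdf_neg]; congr 2; ring

/-! ### Closed form of the inner expectation -/

/-- Closed form of `E[exp (q |y + z σ|)]`, for `σ > 0`; see `K_eq`. -/
noncomputable def K (q σ y : ℝ) : ℝ :=
  exp (q ^ 2 * σ ^ 2 / 2) *
    (exp (q * y) * cdf (y / σ + q * σ) + exp (-(q * y)) * cdf (-(y / σ) + q * σ))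

/-- The derivative of `K q σ` in `y`. The density terms coming from the two distribution functions
are `pdf (y / σ) / σ` and its negative, and cancel. -/
noncomputable def J (q σ y : ℝ) : ℝ :=
  q * (exp (q ^ 2 * σ ^ 2 / 2) *
    (exp (q * y) * cdf (y / σ + q * σ) - exp (-(q * y)) * cdf (-(y / σ) + q * σ)))

/-- Completion of the square. -/
lemma tilt_pos {σ : ℝ} (hσ : 0 < σ) (q y : ℝ) :
    exp (q ^ 2 * σ ^ 2 / 2) * exp (q * y) * pdf (y / σ + q * σ) = pdf (y / σ) := by
  rw [pdf_eq, pdf_eq]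
  have : exp (-(y / σ) ^ 2 / 2)
      = exp (q ^ 2 * σ ^ 2 / 2) * exp (q * y) * exp (-(y / σ + q * σ) ^ 2 / 2) := by
    rw [← exp_add, ← exp_add]; congr 1; field_simp; ring
  rw [this]; ring

lemma tilt_neg {σ : ℝ} (hσ : 0 < σ) (q y : ℝ) :
    exp (q ^ 2 * σ ^ 2 / 2) * exp (-(q * y)) * pdf (-(y / σ) + q * σ) = pdf (y / σ) := by
  have := tilt_pos hσ q (-y)
  rwa [neg_div, pdf_neg, mul_neg] at this

/-- The derivative of `K` along a curve in `(σ, y)`, which encodes both partial derivatives. -/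
lemma hasDerivAt_K (q : ℝ) {σ y : ℝ → ℝ} {σ' y' t : ℝ} (hσ : HasDerivAt σ σ' t)
    (hy : HasDerivAt y y' t) (h0 : 0 < σ t) :
    HasDerivAt (fun t => K q (σ t) (y t))
      ((q ^ 2 * σ t * K q (σ t) (y t) + 2 * q * pdf (y t / σ t)) * σ' + J q (σ t) (y t) * y') t := by
  have hd := hy.div hσ h0.ne'
  have e1 := ((hσ.pow 2).const_mul (q ^ 2)).div_const 2 |>.exp
  have e2 := (hy.const_mul q).exp
  have e3 := (hy.const_mul q).neg.exp
  have e4 := (hasDerivAt_cdf _).comp t (hd.add (hσ.const_mul q))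
  have e5 := (hasDerivAt_cdf _).comp t (hd.neg.add (hσ.const_mul q))
  have := e1.mul ((e2.mul e4).add (e3.mul e5))
  have t1 := tilt_pos h0 q (y t)
  have t2 := tilt_neg h0 q (y t)
  refine (this.congr_deriv ?_)
  simp only [K, J, Pi.add_apply, Pi.mul_apply, Pi.neg_apply, Pi.div_apply, Pi.pow_apply, Function.comp]
  linear_combination ((y' * σ t - y t * σ') / σ t ^ 2 + q * σ') * t1
    + (-((y' * σ t - y t * σ') / σ t ^ 2) + q * σ') * t2

lemma hasDerivAt_J (q : ℝ) {σ : ℝ} (h0 : 0 < σ) (y : ℝ) :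
    HasDerivAt (J q σ) (q ^ 2 * K q σ y + 2 * q / σ * pdf (y / σ)) y := by
  have hy := hasDerivAt_id y
  have hd := hy.div_const σ
  have e2 := (hy.const_mul q).exp
  have e3 := (hy.const_mul q).neg.exp
  have e4 := (hasDerivAt_cdf _).comp y (hd.add_const (q * σ))
  have e5 := (hasDerivAt_cdf _).comp y (hd.neg.add_const (q * σ))
  have := (((e2.mul e4).sub (e3.mul e5)).const_mul (exp (q ^ 2 * σ ^ 2 / 2))).const_mul q
  have t1 := tilt_pos h0 q y
  have t2 := tilt_neg h0 q y
  refine (this.congr_deriv ?_)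
  simp only [K, Pi.neg_apply, Function.comp, id]
  linear_combination q / σ * t1 + q / σ * t2

lemma integrable_exp_abs (c : ℝ) : Integrable (fun z => exp (c * |z|)) (gaussianReal 0 1) :=
  integrable_exp_mul_abs (X := id) (integrable_exp_mul_gaussianReal c)
    (integrable_exp_mul_gaussianReal (-c))

lemma integrable_gaussian_iff (f : ℝ → ℝ) :
    Integrable f (gaussianReal 0 1) ↔ Integrable (fun z => pdf z * f z) := by
  rw [gaussianReal_of_var_ne_zero _ one_ne_zero,
    integrable_withDensity_iff_integrable_smul' (measurable_gaussianPDF _ _)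
      (ae_of_all _ fun _ => gaussianPDF_lt_top)]
  simp [pdf]

lemma integral_gaussian (f : ℝ → ℝ) :
    ∫ z, f z ∂(gaussianReal 0 1) = ∫ z, pdf z * f z := by
  rw [integral_gaussianReal_eq_integral_smul one_ne_zero]; rfl

lemma integrable_exp_shift (q y σ : ℝ) :
    Integrable (fun z => exp (q * |y + z * σ|)) (gaussianReal 0 1) := by
  refine ((integrable_exp_abs (|q| * |σ|)).const_mul (exp (|q| * |y|))).mono'
    (by fun_prop) (ae_of_all _ fun z => ?_)
  rw [norm_eq_abs, abs_exp, ← exp_add, exp_le_exp]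
  have h1 : |y + z * σ| ≤ |y| + |z| * |σ| := by rw [← abs_mul]; exact abs_add_le _ _
  have h2 := mul_le_mul_of_nonneg_left h1 (abs_nonneg q)
  have h3 := mul_le_mul_of_nonneg_right (le_abs_self q) (abs_nonneg (y + z * σ))
  nlinarith

/-- The expectation is split at the zero `-y / σ` of `y + z σ`, and the square is completed on each
side. -/
lemma K_eq (q y : ℝ) {σ : ℝ} (hσ : 0 < σ) :
    ∫ z, exp (q * |y + z * σ|) ∂(gaussianReal 0 1) = K q σ y := by
  have hi := (integrable_gaussian_iff _).1 (integrable_exp_shift q y σ)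
  rw [integral_gaussian, ← intervalIntegral.integral_Iic_add_Ioi (b := -(y / σ))
    hi.integrableOn hi.integrableOn]
  have h1 : ∫ z in Iic (-(y / σ)), pdf z * exp (q * |y + z * σ|)
      = exp (q ^ 2 * σ ^ 2 / 2) * (exp (-(q * y)) * cdf (-(y / σ) + q * σ)) := by
    rw [← setIntegral_Iic_pdf_add, ← integral_const_mul, ← integral_const_mul]
    refine setIntegral_congr_fun measurableSet_Iic fun z hz => ?_
    have : y + z * σ ≤ 0 := by
      have : z ≤ -(y / σ) := hz
      rw [← neg_div, le_div_iff₀ hσ] at this; linarith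
    simp only [abs_of_nonpos this, pdf_eq]
    have : exp (-z ^ 2 / 2) * exp (q * -(y + z * σ)) =
      exp (q ^ 2 * σ ^ 2 / 2) * exp (-(q * y)) * exp (-(z + q * σ) ^ 2 / 2) := by
      simp only [← exp_add]; congr 1; ring
    linear_combination (√(2 * π))⁻¹ * this
  have h2 : ∫ z in Ioi (-(y / σ)), pdf z * exp (q * |y + z * σ|)
      = exp (q ^ 2 * σ ^ 2 / 2) * (exp (q * y) * cdf (y / σ + q * σ)) := by
    have : y / σ + q * σ = q * σ - (-(y / σ)) := by ring
    rw [this, ← setIntegral_Ioi_pdf_sub, ← integral_const_mul, ← integral_const_mul]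
    refine setIntegral_congr_fun measurableSet_Ioi fun z hz => ?_
    have : 0 ≤ y + z * σ := by
      have : -(y / σ) < z := hz
      rw [← neg_div, div_lt_iff₀ hσ] at this; linarith
    simp only [abs_of_nonneg this, pdf_eq]
    have : exp (-z ^ 2 / 2) * exp (q * (y + z * σ)) =
      exp (q ^ 2 * σ ^ 2 / 2) * exp (q * y) * exp (-(z - q * σ) ^ 2 / 2) := by
      simp only [← exp_add]; congr 1; ring
    linear_combination (√(2 * π))⁻¹ * this
  rw [h1, h2, K]; ring

lemma one_le_K {q : ℝ} (hq : 0 < q) {σ : ℝ} (hσ : 0 < σ) (y : ℝ) : 1 ≤ K q σ y := by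
  rw [← K_eq q y hσ]
  have := integral_mono (μ := gaussianReal 0 1) (integrable_const (1 : ℝ))
    (integrable_exp_shift q y σ) (fun z => one_le_exp (by positivity))
  simpa using this

lemma abs_J_le {q : ℝ} (hq : 0 < q) (σ y : ℝ) : |J q σ y| ≤ q * K q σ y := by
  have h1 : 0 ≤ exp (q * y) * cdf (y / σ + q * σ) := mul_nonneg (exp_pos _).le (cdf_nonneg _)
  have h2 : 0 ≤ exp (-(q * y)) * cdf (-(y / σ) + q * σ) := mul_nonneg (exp_pos _).le (cdf_nonneg _)
  rw [J, K, abs_mul, abs_mul, abs_of_pos hq, abs_exp]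
  gcongr
  rw [abs_le]; constructor <;> linarith

lemma log_K_le {q : ℝ} (hq : 0 < q) {σ : ℝ} (hσ : 0 < σ) (y : ℝ) :
    log (K q σ y) ≤ q ^ 2 * σ ^ 2 / 2 + log 2 + q * |y| := by
  have h : K q σ y ≤ exp (q ^ 2 * σ ^ 2 / 2) * 2 * exp (q * |y|) := by
    rw [K, mul_assoc]
    gcongr
    have h1 : exp (q * y) * cdf (y / σ + q * σ) ≤ exp (q * |y|) * 1 := by
      gcongr
      · exact cdf_nonneg _
      · exact le_abs_self y
      · exact cdf_le_one _
    have h2 : exp (-(q * y)) * cdf (-(y / σ) + q * σ) ≤ exp (q * |y|) * 1 := by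
      rw [← mul_neg]
      gcongr
      · exact cdf_nonneg _
      · exact neg_le_abs y
      · exact cdf_le_one _
    linarith
  have := log_le_log (by linarith [one_le_K hq hσ y]) h
  rwa [log_mul (by positivity) (by positivity), log_mul (by positivity) (by positivity), log_exp,
    log_exp] at this


@[fun_prop]
lemma continuous_cdf : Continuous cdf :=
  continuous_iff_continuousAt.2 fun u => (hasDerivAt_cdf u).continuousAt

/-! ### The power `K ^ r` and its derivatives -/

lemma continuous_K (q σ : ℝ) : Continuous (K q σ) := by unfold K; fun_prop

lemma continuous_J (q σ : ℝ) : Continuous (J q σ) := by unfold J; fun_prop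

/-- `exp (m A)` in the variables `σ = √(b - t)`, `y`, with `q = m'` and `r = m / m'`; that is,
the power `K ^ r`. -/
noncomputable def H (r q σ y : ℝ) : ℝ := exp (r * log (K q σ y))

/-- The logarithmic derivative `∂_y K / K`, which is `m' ∂ₓA`. -/
noncomputable def D (q σ y : ℝ) : ℝ := J q σ y / K q σ y

/-- The ratio `∂_y² K / K`. -/
noncomputable def N (q σ y : ℝ) : ℝ := q ^ 2 + 2 * q / σ * pdf (y / σ) / K q σ y

section
variable {r q σ : ℝ}

lemma K_pos (hq : 0 < q) (hσ : 0 < σ) (y : ℝ) : 0 < K q σ y :=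
  zero_lt_one.trans_le (one_le_K hq hσ y)

lemma continuous_H (r : ℝ) (hq : 0 < q) (hσ : 0 < σ) : Continuous (H r q σ) := by
  unfold H
  exact (((continuous_K q σ).log fun y => (K_pos hq hσ y).ne').const_mul r).rexp

lemma continuous_D (hq : 0 < q) (hσ : 0 < σ) : Continuous (D q σ) := by
  unfold D
  exact (continuous_J q σ).div (continuous_K q σ) fun y => (K_pos hq hσ y).ne'

lemma continuous_N (hq : 0 < q) (hσ : 0 < σ) : Continuous (N q σ) := by
  unfold N
  exact (Continuous.div (by fun_prop) (continuous_K q σ) fun y => (K_pos hq hσ y).ne').const_add _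

lemma abs_D_le (hq : 0 < q) (hσ : 0 < σ) (y : ℝ) : |D q σ y| ≤ q := by
  rw [D, abs_div, abs_of_pos (K_pos hq hσ y), div_le_iff₀ (K_pos hq hσ y)]
  exact abs_J_le hq σ y

lemma N_nonneg (hq : 0 < q) (hσ : 0 < σ) (y : ℝ) : 0 ≤ N q σ y := by
  have := K_pos hq hσ y
  have := pdf_nonneg (y / σ)
  unfold N; positivity

lemma N_le (hq : 0 < q) (hσ : 0 < σ) (y : ℝ) : N q σ y ≤ q ^ 2 + 2 * q / σ := by
  have h1 := one_le_K hq hσ y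
  have h2 := pdf_le_one (y / σ)
  have : 0 < 2 * q / σ := by positivity
  rw [N, add_le_add_iff_left, div_le_iff₀ (K_pos hq hσ y)]
  nlinarith

lemma H_pos (r q σ y : ℝ) : 0 < H r q σ y := exp_pos _

lemma H_le (hr : 0 < r) (hq : 0 < q) (hσ : 0 < σ) {T x y : ℝ} (hT : σ ^ 2 ≤ T) {R z : ℝ}
    (hy : |y| ≤ |x| + R * |z|) :
    H r q σ y ≤ exp (r * (q ^ 2 * T / 2 + log 2 + q * |x|)) * exp (r * q * R * |z|) := by
  rw [H, ← exp_add, exp_le_exp]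
  calc r * log (K q σ y) ≤ r * (q ^ 2 * σ ^ 2 / 2 + log 2 + q * |y|) := by
        gcongr; exact log_K_le hq hσ y
    _ ≤ r * (q ^ 2 * T / 2 + log 2 + q * (|x| + R * |z|)) := by gcongr
    _ = _ := by ring

/-- The time derivative along `u ↦ (√(b - u), x + z √(u - a))`; the term `-N / 2` is the backward
heat equation for `K`. -/
lemma hasDerivAt_H_time (r : ℝ) (hq : 0 < q) {a b t : ℝ} (ht : t ∈ Ioo a b) (x z : ℝ) :
    HasDerivAt (fun u => H r q √(b - u) (x + z * √(u - a)))
      (r * H r q √(b - t) (x + z * √(t - a)) *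
        (-N q √(b - t) (x + z * √(t - a)) / 2
          + D q √(b - t) (x + z * √(t - a)) * (z / (2 * √(t - a))))) t := by
  have ha : 0 < t - a := by linarith [ht.1]
  have hb : 0 < b - t := by linarith [ht.2]
  have hσ := ((hasDerivAt_id' t).const_sub b).sqrt hb.ne'
  have hs := ((hasDerivAt_id' t).sub_const a).sqrt ha.ne'
  have hσ0 : 0 < √(b - t) := sqrt_pos.2 hb
  have hs0 : 0 < √(t - a) := sqrt_pos.2 ha
  have hK := K_pos hq hσ0 (x + z * √(t - a))
  have := (((hasDerivAt_K q hσ ((hs.const_mul z).const_add x) hσ0).log hK.ne').const_mul r).exp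
  refine this.congr_deriv ?_
  simp only [H, N, D]
  field_simp

lemma hasDerivAt_log_K (hq : 0 < q) (hσ : 0 < σ) (y : ℝ) :
    HasDerivAt (fun y => log (K q σ y)) (D q σ y) y := by
  have := (hasDerivAt_K q (hasDerivAt_const y σ) (hasDerivAt_id' y) hσ).log (K_pos hq hσ y).ne'
  refine this.congr_deriv ?_
  simp [D]

lemma hasDerivAt_HD (r : ℝ) (hq : 0 < q) (hσ : 0 < σ) (y : ℝ) :
    HasDerivAt (fun y => H r q σ y * D q σ y)
      (H r q σ y * (N q σ y + (r - 1) * D q σ y ^ 2)) y := by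
  have hK := K_pos hq hσ y
  have h1 := ((hasDerivAt_log_K hq hσ y).const_mul r).exp
  have h2 := hasDerivAt_K q (hasDerivAt_const y σ) (hasDerivAt_id' y) hσ
  have := h1.mul ((hasDerivAt_J q hσ y).div h2 hK.ne')
  refine this.congr_deriv ?_
  simp only [H, N, D, Pi.div_apply]
  field_simp
  ring

end

/-! ### Gaussian expectations -/

lemma integrable_of_bound {f : ℝ → ℝ} (hf : Measurable f) {M c : ℝ}
    (h : ∀ z, |f z| ≤ M * exp (c * |z|)) : Integrable f (gaussianReal 0 1) :=
  ((integrable_exp_abs c).const_mul M).mono' hf.aestronglyMeasurable (ae_of_all _ h)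

lemma abs_le_exp_abs (z : ℝ) : |z| ≤ exp |z| := by linarith [add_one_le_exp |z|]

/-- Gaussian integration by parts (Stein's lemma) `E[z f(z)] = E[f'(z)]`, for `f` and `f'` of at
most exponential growth. -/
lemma stein {f f' : ℝ → ℝ} (hf : ∀ z, HasDerivAt f (f' z) z) {M M' c : ℝ}
    (h : ∀ z, |f z| ≤ M * exp (c * |z|)) (h' : ∀ z, |f' z| ≤ M' * exp (c * |z|)) :
    Integrable (fun z => z * f z) (gaussianReal 0 1) ∧
      ∫ z, z * f z ∂(gaussianReal 0 1) = ∫ z, f' z ∂(gaussianReal 0 1) := by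
  have hfm : Measurable f :=
    (continuous_iff_continuousAt.2 fun z => (hf z).continuousAt).measurable
  have hfm' : Measurable f' := by
    have : f' = deriv f := funext fun z => (hf z).deriv.symm
    rw [this]; exact measurable_deriv f
  have i1 := integrable_of_bound hfm h
  have i2 := integrable_of_bound hfm' h'
  have i3 : Integrable (fun z => z * f z) (gaussianReal 0 1) := by
    refine integrable_of_bound (M := M) (c := c + 1) (by fun_prop) fun z => ?_
    rw [abs_mul]
    calc |z| * |f z| ≤ exp |z| * (M * exp (c * |z|)) := by
          gcongr
          · exact abs_le_exp_abs z
          · exact h z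
      _ = _ := by rw [add_mul, exp_add, one_mul]; ring
  refine ⟨i3, ?_⟩
  rw [integrable_gaussian_iff] at i1 i2 i3
  have := integral_mul_deriv_eq_deriv_mul_of_integrable (u := f) (u' := f') (v := pdf)
    (v' := fun u => -(u * pdf u)) (fun z _ => hf z) (fun z _ => hasDerivAt_pdf z)
    (by convert i3.neg using 1; ext z; simp; ring) (by convert i2 using 1; ext z; simp; ring)
    (by convert i1 using 1; ext z; simp; ring)
  rw [integral_gaussian, integral_gaussian]
  calc ∫ z, pdf z * (z * f z) = -∫ z, f z * -(z * pdf z) := by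
        rw [← integral_neg]; congr 1; ext z; ring
    _ = ∫ z, f' z * pdf z := by rw [this, neg_neg]
    _ = _ := by congr 1; ext z; ring

lemma abs_shift_le (x z : ℝ) {s R : ℝ} (hs : 0 ≤ s) (hR : s ≤ R) :
    |x + z * s| ≤ |x| + R * |z| := by
  refine (abs_add_le _ _).trans ?_
  rw [abs_mul, abs_of_nonneg hs, mul_comm R]
  gcongr

/-- Differentiation under the expectation. On a neighbourhood of `t` whose closure lies in `(a, b)`
both square roots stay away from `0`, so the derivative has a uniform bound `const * exp (c |z|)`. -/
lemma hasDerivAt_integral_H {r q a b t : ℝ} (hr : 0 < r) (hq : 0 < q) (ht : t ∈ Ioo a b) (x : ℝ) :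
    HasDerivAt (fun u => ∫ z, H r q √(b - u) (x + z * √(u - a)) ∂(gaussianReal 0 1))
      (∫ z, r * H r q √(b - t) (x + z * √(t - a)) *
        (-N q √(b - t) (x + z * √(t - a)) / 2
          + D q √(b - t) (x + z * √(t - a)) * (z / (2 * √(t - a)))) ∂(gaussianReal 0 1)) t := by
  obtain ⟨hat, htb⟩ := ht
  have hσ0 : 0 < √((b - t) / 2) := sqrt_pos.2 (by linarith)
  have hs0 : 0 < √((t - a) / 2) := sqrt_pos.2 (by linarith)
  have hbd : ∀ u ∈ Ioo a b, ∀ z, H r q √(b - u) (x + z * √(u - a)) ≤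
      exp (r * (q ^ 2 * (b - a) / 2 + log 2 + q * |x|)) * exp (r * q * √(b - a) * |z|) := by
    intro u hu z
    refine H_le hr hq (sqrt_pos.2 (by linarith [hu.2])) ?_
      (abs_shift_le x z (sqrt_nonneg _) (sqrt_le_sqrt (by linarith [hu.2])))
    rw [sq_sqrt (by linarith [hu.2])]; linarith [hu.1]
  have hcont : ∀ u ∈ Ioo a b, Continuous fun z => H r q √(b - u) (x + z * √(u - a)) := fun u hu =>
    (continuous_H r hq (sqrt_pos.2 (by linarith [hu.2]))).comp (by fun_prop)
  set M := exp (r * (q ^ 2 * (b - a) / 2 + log 2 + q * |x|)) with hM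
  set c := r * q * √(b - a) with hc
  refine (hasDerivAt_integral_of_dominated_loc_of_deriv_le
    (F := fun u z => H r q √(b - u) (x + z * √(u - a)))
    (F' := fun u z => r * H r q √(b - u) (x + z * √(u - a)) *
        (-N q √(b - u) (x + z * √(u - a)) / 2
          + D q √(b - u) (x + z * √(u - a)) * (z / (2 * √(u - a)))))
    (s := Ioo ((a + t) / 2) ((t + b) / 2))
    (bound := fun z => r * M * ((q ^ 2 + 2 * q / √((b - t) / 2)) / 2 + q / (2 * √((t - a) / 2)))
      * exp ((c + 1) * |z|))
    (Ioo_mem_nhds (by linarith) (by linarith)) ?_ ?_ ?_ ?_ ?_ ?_).2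
  · filter_upwards [Ioo_mem_nhds hat htb] with u hu
    exact (hcont u hu).aestronglyMeasurable
  · refine integrable_of_bound (hcont t ⟨hat, htb⟩).measurable (M := M) (c := c) fun z => ?_
    rw [abs_of_pos (H_pos _ _ _ _)]
    exact hbd t ⟨hat, htb⟩ z
  · have hσ : 0 < √(b - t) := sqrt_pos.2 (by linarith)
    have c1 := continuous_N hq hσ
    have c2 := continuous_D hq hσ
    have c3 := hcont t ⟨hat, htb⟩
    exact Continuous.aestronglyMeasurable (by fun_prop)
  · refine ae_of_all _ fun z u hu => ?_
    have hu' : u ∈ Ioo a b := ⟨by linarith [hu.1], by linarith [hu.2]⟩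
    have hσ : √((b - t) / 2) ≤ √(b - u) := sqrt_le_sqrt (by linarith [hu.2])
    have hs : √((t - a) / 2) ≤ √(u - a) := sqrt_le_sqrt (by linarith [hu.1])
    have hσp := hσ0.trans_le hσ
    have hsp := hs0.trans_le hs
    have b1 := hbd u hu' z
    have b2 := H_pos r q √(b - u) (x + z * √(u - a))
    have b3 : |-N q √(b - u) (x + z * √(u - a)) / 2
          + D q √(b - u) (x + z * √(u - a)) * (z / (2 * √(u - a)))| ≤
        ((q ^ 2 + 2 * q / √((b - t) / 2)) / 2 + q / (2 * √((t - a) / 2))) * exp |z| := by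
      refine (abs_add_le _ _).trans ?_
      rw [add_mul]
      refine add_le_add ?_ ?_
      · rw [abs_div, abs_neg, abs_of_nonneg (N_nonneg hq hσp _), abs_two]
        have : N q √(b - u) (x + z * √(u - a)) / 2 ≤ (q ^ 2 + 2 * q / √((b - t) / 2)) / 2 := by
          gcongr
          exact (N_le hq hσp _).trans (by gcongr)
        refine this.trans (le_mul_of_one_le_right (by positivity) (one_le_exp (abs_nonneg z)))
      · rw [abs_mul, abs_div, abs_of_pos (by positivity : 0 < 2 * √(u - a))]
        calc _ ≤ q * (exp |z| / (2 * √((t - a) / 2))) := by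
              gcongr
              · exact abs_D_le hq hσp _
              · exact abs_le_exp_abs z
          _ = _ := by ring
    rw [norm_eq_abs, abs_mul, abs_mul, abs_of_pos hr, abs_of_pos b2]
    calc _ ≤ r * (M * exp (c * |z|)) * (((q ^ 2 + 2 * q / √((b - t) / 2)) / 2
              + q / (2 * √((t - a) / 2))) * exp |z|) := by gcongr
      _ = _ := by rw [add_mul c, exp_add, one_mul]; ring
  · exact (integrable_exp_abs (c + 1)).const_mul _
  · refine ae_of_all _ fun z u hu => hasDerivAt_H_time r hq ⟨?_, ?_⟩ x z
    · linarith [hu.1]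
    · linarith [hu.2]

/-- Integration by parts replaces the drift term `z H D` by second derivatives of `H`. The terms
in `N` then cancel, leaving only the square of the logarithmic derivative. -/
lemma integral_time_deriv {r q σ s : ℝ} (hr : 0 < r) (hq : 0 < q) (hσ : 0 < σ) (hs : 0 < s)
    (x : ℝ) :
    ∫ z, r * H r q σ (x + z * s) *
        (-N q σ (x + z * s) / 2 + D q σ (x + z * s) * (z / (2 * s))) ∂(gaussianReal 0 1) =
      r * (r - 1) / 2 * ∫ z, H r q σ (x + z * s) * D q σ (x + z * s) ^ 2 ∂(gaussianReal 0 1) := by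
  have hH : ∀ z, |H r q σ (x + z * s)| ≤
      exp (r * (q ^ 2 * σ ^ 2 / 2 + log 2 + q * |x|)) * exp (r * q * s * |z|) := fun z => by
    rw [abs_of_pos (H_pos _ _ _ _)]
    exact H_le hr hq hσ le_rfl (abs_shift_le x z hs.le le_rfl)
  set M := exp (r * (q ^ 2 * σ ^ 2 / 2 + log 2 + q * |x|)) with hM
  set c := r * q * s with hc
  have hcH := continuous_H r hq hσ
  have hcD := continuous_D hq hσ
  have hcN := continuous_N hq hσ
  -- a bounded continuous factor preserves the exponential bound
  have key : ∀ (g : ℝ → ℝ) (P : ℝ), (∀ y, |g y| ≤ P) → ∀ z,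
      |H r q σ (x + z * s) * g (x + z * s)| ≤ M * P * exp (c * |z|) := fun g P hg z => by
    have hP := (abs_nonneg _).trans (hg (x + z * s))
    rw [abs_mul]
    calc _ ≤ (M * exp (c * |z|)) * P := by gcongr; exacts [hH z, hg _]
      _ = _ := by ring
  have bD := abs_D_le hq hσ
  have bN : ∀ y, |N q σ y| ≤ q ^ 2 + 2 * q / σ := fun y => by
    rw [abs_of_nonneg (N_nonneg hq hσ y)]; exact N_le hq hσ y
  have bD2 : ∀ y, |D q σ y ^ 2| ≤ q ^ 2 := fun y => by
    rw [abs_pow]; gcongr; exact bD y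
  have iN := integrable_of_bound (by fun_prop) (key (N q σ) _ bN)
  have iD := integrable_of_bound (by fun_prop) (key (fun y => D q σ y ^ 2) _ bD2)
  have hst := stein (f := fun z => H r q σ (x + z * s) * D q σ (x + z * s))
    (f' := fun z => H r q σ (x + z * s) * (s * (N q σ (x + z * s)
      + (r - 1) * D q σ (x + z * s) ^ 2)))
    (fun z => by
      have h1 : HasDerivAt (fun z => x + z * s) s z := by
        simpa using ((hasDerivAt_id' z).mul_const s).const_add x
      refine ((hasDerivAt_HD r hq hσ (x + z * s)).comp z h1).congr_deriv ?_
      ring)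
    (key (D q σ) _ bD)
    (key (fun y => s * (N q σ y + (r - 1) * D q σ y ^ 2))
      (s * ((q ^ 2 + 2 * q / σ) + |r - 1| * q ^ 2)) fun y => by
        rw [abs_mul, abs_of_pos hs]
        gcongr
        refine (abs_add_le _ _).trans ?_
        rw [abs_mul]
        gcongr
        exacts [bN y, bD2 y])
  obtain ⟨iz, hz⟩ := hst
  calc _ = ∫ z, (-(r / 2) * (H r q σ (x + z * s) * N q σ (x + z * s))
        + r / (2 * s) * (z * (H r q σ (x + z * s) * D q σ (x + z * s)))) ∂(gaussianReal 0 1) := by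
        congr 1; ext z; ring
    _ = -(r / 2) * (∫ z, H r q σ (x + z * s) * N q σ (x + z * s) ∂(gaussianReal 0 1))
        + r / (2 * s) * ∫ z, H r q σ (x + z * s) * (s * (N q σ (x + z * s)
          + (r - 1) * D q σ (x + z * s) ^ 2)) ∂(gaussianReal 0 1) := by
        rw [integral_add (iN.const_mul _) (iz.const_mul _), integral_const_mul,
          integral_const_mul, hz]
    _ = -(r / 2) * (∫ z, H r q σ (x + z * s) * N q σ (x + z * s) ∂(gaussianReal 0 1))
        + r / (2 * s) * (s * (∫ z, H r q σ (x + z * s) * N q σ (x + z * s) ∂(gaussianReal 0 1))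
        + s * (r - 1) * ∫ z, H r q σ (x + z * s) * D q σ (x + z * s) ^ 2 ∂(gaussianReal 0 1)) := by
        rw [← integral_const_mul s, ← integral_const_mul (s * (r - 1)),
          ← integral_add (iN.const_mul _) (iD.const_mul _)]
        congr 3; ext z; ring
    _ = _ := by
        generalize ∫ z, H r q σ (x + z * s) * N q σ (x + z * s) ∂(gaussianReal 0 1) = I
        generalize ∫ z, H r q σ (x + z * s) * D q σ (x + z * s) ^ 2 ∂(gaussianReal 0 1) = I'
        field_simp
        ring

lemma integral_H_pos {r q σ s : ℝ} (hr : 0 < r) (hq : 0 < q) (hσ : 0 < σ) (hs : 0 ≤ s) (x : ℝ) :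
    0 < ∫ z, H r q σ (x + z * s) ∂(gaussianReal 0 1) := by
  have hcH := continuous_H r hq hσ
  refine integral_exp_pos (integrable_of_bound (f := fun z => H r q σ (x + z * s))
    (M := exp (r * (q ^ 2 * σ ^ 2 / 2 + log 2 + q * |x|))) (c := r * q * s)
    (by fun_prop) fun z => ?_)
  rw [abs_of_pos (H_pos _ _ _ _)]
  exact H_le hr hq hσ le_rfl (abs_shift_le x z hs le_rfl)

/-! ### Identification of `A`, `B`, `C` -/

lemma A_eq (q y : ℝ) {b t : ℝ} (ht : t < b) : A b q t y = 1 / q * log (K q √(b - t) y) := by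
  rw [A, K_eq q y (sqrt_pos.2 (by linarith))]

lemma deriv_A {q b t : ℝ} (hq : 0 < q) (ht : t < b) (y : ℝ) :
    deriv (A b q t) y = D q √(b - t) y / q := by
  have : A b q t = fun y => 1 / q * log (K q √(b - t) y) := funext fun y => A_eq q y ht
  rw [this, ((hasDerivAt_log_K hq (sqrt_pos.2 (by linarith)) y).const_mul _).deriv]
  ring

lemma exp_mul_A (m : ℝ) {q b t : ℝ} (ht : t < b) (y : ℝ) :
    exp (m * A b q t y) = H (m / q) q √(b - t) y := by
  rw [A_eq q y ht, H]; congr 1; ring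

lemma B_eq (a m : ℝ) {q b t : ℝ} (ht : t < b) (x : ℝ) :
    B a b m q t x = 1 / m *
      log (∫ z, H (m / q) q √(b - t) (x + z * √(t - a)) ∂(gaussianReal 0 1)) := by
  simp only [B, exp_mul_A m ht]

lemma C_eq {a b m q t : ℝ} (hm : 0 < m) (hq : 0 < q) (ht : t < b) (x : ℝ) :
    C a b m q t x = (∫ z, H (m / q) q √(b - t) (x + z * √(t - a)) *
        D q √(b - t) (x + z * √(t - a)) ^ 2 ∂(gaussianReal 0 1)) /
      (q ^ 2 * ∫ z, H (m / q) q √(b - t) (x + z * √(t - a)) ∂(gaussianReal 0 1)) := by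
  have hG := integral_H_pos (div_pos hm hq) hq (sqrt_pos.2 (sub_pos.2 ht)) (sqrt_nonneg (t - a)) x
  have hV : ∀ y, V a b m q t x y = H (m / q) q √(b - t) y /
      ∫ z, H (m / q) q √(b - t) (x + z * √(t - a)) ∂(gaussianReal 0 1) := fun y => by
    rw [V, mul_sub, exp_sub, exp_mul_A m ht, B_eq a m ht, ← mul_assoc, mul_one_div_cancel hm.ne',
      one_mul, exp_log hG]
  rw [C, ← integral_div]
  congr 1; ext z
  rw [hV, deriv_A hq ht]
  field_simp

end ParisiStep

/-- `∂ₜB(t,x) = ((m - m')/2) C(t,x)` on `(a,b) × ℝ`. -/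
theorem B_time_deriv (a b m m' : ℝ) (ha : 0 ≤ a) (hab : a < b)
    (hm : 0 < m) (hmm' : m < m') :
    ∀ t ∈ Set.Ioo a b, ∀ x : ℝ,
      HasDerivAt (fun s => B a b m m' s x) ((m - m') / 2 * C a b m m' t x) t := by
  intro t ht x
  have hq : 0 < m' := hm.trans hmm'
  have hr : 0 < m / m' := div_pos hm hq
  have hσ : 0 < Real.sqrt (b - t) := Real.sqrt_pos.2 (sub_pos.2 ht.2)
  have hs : 0 < Real.sqrt (t - a) := Real.sqrt_pos.2 (sub_pos.2 ht.1)
  have hG := ParisiStep.integral_H_pos hr hq hσ hs.le x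
  have h := ParisiStep.hasDerivAt_integral_H hr hq ht x
  rw [ParisiStep.integral_time_deriv hr hq hσ hs x] at h
  have hB : (fun s => B a b m m' s x) =ᶠ[nhds t] fun s => 1 / m * Real.log
      (∫ z, ParisiStep.H (m / m') m' (Real.sqrt (b - s)) (x + z * Real.sqrt (s - a))
        ∂(gaussianReal 0 1)) := by
    filter_upwards [Iio_mem_nhds ht.2] with s hs
    exact ParisiStep.B_eq a m hs x
  refine (((h.log hG.ne').const_mul (1 / m)).congr_of_eventuallyEq hB).congr_deriv ?_
  rw [ParisiStep.C_eq hm hq ht.2]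
  -- `field_simp` would otherwise normalise the integrands
  generalize ∫ z, ParisiStep.H (m / m') m' (Real.sqrt (b - t)) (x + z * Real.sqrt (t - a)) *
    ParisiStep.D m' (Real.sqrt (b - t)) (x + z * Real.sqrt (t - a)) ^ 2 ∂(gaussianReal 0 1) = I
  generalize ∫ z, ParisiStep.H (m / m') m' (Real.sqrt (b - t)) (x + z * Real.sqrt (t - a))
    ∂(gaussianReal 0 1) = G at hG
  field_simp
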